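/- Suppose μ ≥ 0 componentwise. Let U* be a relaxed feasible solution of M-CLP, and define U₀ : [0,T] → ℝ^J by U₀(0) = U*(0+) := lim_{t↓0} U*(t) and U₀(t) = U*(t) for 0 < t ≤ T. Then U₀ is a relaxed feasible solution of M-CLP that is right-continuous at 0 (hence on all of [0,T]), and z(U₀) − z(U*) = μᵀ(U*(0+) − U*(0)) ≥ 0. -/

import Mathlib

open MeasureTheory Filter

/-- A relaxed feasible solution of M-CLP: as a feasible solution, but right-continuity
is only required on `(0,T]`, so possibly `U(0) < U(0+)`. -/
def RelaxedPrimalFeasible {K J : ℕ} (A : Matrix (Fin K) (Fin J) ℝ) (b β lam : Fin K → ℝ)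
    (T : ℝ) (U : ℝ → Fin J → ℝ) : Prop :=
  (∀ j, MonotoneOn (fun t => U t j) (Set.Icc 0 T)) ∧
  (∀ j, ∀ t ∈ Set.Ioo (0:ℝ) T,
    Tendsto (fun s => U s j) (nhdsWithin t (Set.Ioi t)) (nhds (U t j))) ∧
  (∀ j, 0 ≤ U 0 j) ∧
  (∀ t ∈ Set.Ico (0:ℝ) T, ∀ k, A.mulVec (U t) k ≤ β k + t * b k) ∧
  (∀ k, A.mulVec (U T) k ≤ β k + T * b k + lam k)

/-- A relaxed feasible solution of M-CLP*: as a feasible solution, but right-continuity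
is only required on `(0,T]`, so possibly `P(0) < P(0+)`. -/
def RelaxedDualFeasible {K J : ℕ} (A : Matrix (Fin K) (Fin J) ℝ) (c γ μ : Fin J → ℝ)
    (T : ℝ) (P : ℝ → Fin K → ℝ) : Prop :=
  (∀ k, MonotoneOn (fun s => P s k) (Set.Icc 0 T)) ∧
  (∀ k, ∀ s ∈ Set.Ioo (0:ℝ) T,
    Tendsto (fun r => P r k) (nhdsWithin s (Set.Ioi s)) (nhds (P s k))) ∧
  (∀ k, 0 ≤ P 0 k) ∧
  (∀ s ∈ Set.Ico (0:ℝ) T, ∀ j, γ j + s * c j ≤ A.transpose.mulVec (P s) j) ∧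
  (∀ j, γ j + T * c j + μ j ≤ A.transpose.mulVec (P T) j)

/-- `ν i` is the Lebesgue–Stieltjes measure on `[0,T]` of the nondecreasing function
`F · i` (right-continuous on `(0,T]`) with the convention `F(0-) = 0`, where
`L i = F(0+) i` is the right limit at `0`: it is carried by `[0,T]`, assigns mass
`F(0+) i` to `{0}`, and satisfies `ν i [0,x] = F x i = F(x+) i` for `0 < x ≤ T`. -/
def RelaxedLSFamily {I : Type*} (T : ℝ) (F : ℝ → I → ℝ) (L : I → ℝ)
    (ν : I → Measure ℝ) : Prop :=
  ∀ i, ν i (Set.Icc 0 T)ᶜ = 0 ∧ ν i {0} = ENNReal.ofReal (L i) ∧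
    ∀ x : ℝ, 0 < x → x ≤ T → ν i (Set.Icc 0 x) = ENNReal.ofReal (F x i)

/-- The M-CLP objective. -/
noncomputable def zPrimal {J : ℕ} (c γ μ : Fin J → ℝ) (T : ℝ) (U : ℝ → Fin J → ℝ)
    (ν : Fin J → Measure ℝ) : ℝ :=
  (∑ j, μ j * U 0 j) + ∑ j, ∫ t in Set.Icc (0:ℝ) T, (γ j + (T - t) * c j) ∂(ν j)

/-- The M-CLP* objective. -/
noncomputable def zDual {K : ℕ} (b β lam : Fin K → ℝ) (T : ℝ) (P : ℝ → Fin K → ℝ)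
    (ν : Fin K → Measure ℝ) : ℝ :=
  (∑ k, lam k * P 0 k) + ∑ k, ∫ s in Set.Icc (0:ℝ) T, (β k + (T - s) * b k) ∂(ν k)

/-!
At `t = 0`, the constraints for `U*(0+)` are limits of the constraints for `U*(t)` as `t ↓ 0`, and
monotonicity passes to the limit too. The Lebesgue–Stieltjes measure already charges `{0}` with
`U*(0+)`, so it is the same before and after the modification, and the objective changes only
through the term `μᵀ U(0)`.
-/

open Set Function Topology

section RightLimit

variable {α β γ : Type*} [LinearOrder α] [TopologicalSpace α]
  {f : α → β} {a b t : α} {l : β}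

theorem update_eventuallyEq_nhdsGT_of_le (hat : a ≤ t) : update f a l =ᶠ[𝓝[>] t] f := by
  filter_upwards [self_mem_nhdsWithin] with s hs
  exact update_of_ne (hat.trans_lt hs).ne' l f

variable [TopologicalSpace β]

theorem tendsto_update_nhdsGT_of_mem_Ico
    (hf : ∀ t ∈ Ioo a b, Tendsto f (𝓝[>] t) (𝓝 (f t))) (hl : Tendsto f (𝓝[>] a) (𝓝 l))
    (ht : t ∈ Ico a b) : Tendsto (update f a l) (𝓝[>] t) (𝓝 (update f a l t)) := by
  refine Tendsto.congr' (update_eventuallyEq_nhdsGT_of_le ht.1).symm ?_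
  rcases ht.1.eq_or_lt with rfl | hat
  · simpa only [update_self] using hl
  · simpa only [update_of_ne hat.ne'] using hf t ⟨hat, ht.2⟩

variable [OrderTopology α] [DenselyOrdered α]

theorem comp_update_le_of_tendsto_nhdsGT [Preorder γ] [TopologicalSpace γ]
    [OrderClosedTopology γ] {φ : β → γ} {g : α → γ} (hφ : ContinuousAt φ l)
    (hg : ContinuousWithinAt g (Ioi a) a) (hl : Tendsto f (𝓝[>] a) (𝓝 l))
    (hle : ∀ t ∈ Ioo a b, φ (f t) ≤ g t) (ht : t ∈ Ico a b) : φ (update f a l t) ≤ g t := by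
  rcases ht.1.eq_or_lt with rfl | hat
  · have : (𝓝[>] a).NeBot := nhdsGT_neBot_of_exists_gt ⟨b, ht.2⟩
    rw [update_self]
    refine le_of_tendsto_of_tendsto (hφ.tendsto.comp hl) hg ?_
    filter_upwards [Ioo_mem_nhdsGT ht.2] using hle
  · simpa only [update_of_ne hat.ne'] using hle t ⟨hat, ht.2⟩

variable [Preorder β]

theorem apply_left_le_of_monotoneOn_of_tendsto_nhdsGT [ClosedIciTopology β]
    (hf : MonotoneOn f (Icc a b)) (hl : Tendsto f (𝓝[>] a) (𝓝 l)) (hab : a < b) : f a ≤ l := by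
  have : (𝓝[>] a).NeBot := nhdsGT_neBot_of_exists_gt ⟨b, hab⟩
  refine ge_of_tendsto hl ?_
  filter_upwards [Ioo_mem_nhdsGT hab] with s hs
  exact hf (left_mem_Icc.2 hab.le) (Ioo_subset_Icc_self hs) hs.1.le

theorem le_apply_of_monotoneOn_of_tendsto_nhdsGT [ClosedIicTopology β]
    (hf : MonotoneOn f (Icc a b)) (hl : Tendsto f (𝓝[>] a) (𝓝 l)) (ht : t ∈ Ioc a b) : l ≤ f t := by
  have : (𝓝[>] a).NeBot := nhdsGT_neBot_of_exists_gt ⟨t, ht.1⟩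
  refine le_of_tendsto hl ?_
  filter_upwards [Ioo_mem_nhdsGT ht.1] with s hs
  exact hf ⟨hs.1.le, hs.2.le.trans ht.2⟩ (Ioc_subset_Icc_self ht) hs.2.le

theorem monotoneOn_update_left_of_tendsto_nhdsGT [ClosedIicTopology β]
    (hf : MonotoneOn f (Icc a b)) (hl : Tendsto f (𝓝[>] a) (𝓝 l)) :
    MonotoneOn (update f a l) (Icc a b) := by
  refine monotoneOn_iff_forall_lt.2 fun x hx y hy hxy => ?_
  rw [update_of_ne (hx.1.trans_lt hxy).ne']
  rcases hx.1.eq_or_lt with rfl | hax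
  · simpa only [update_self] using le_apply_of_monotoneOn_of_tendsto_nhdsGT hf hl ⟨hxy, hy.2⟩
  · simpa only [update_of_ne hax.ne'] using hf hx hy hxy.le

end RightLimit

theorem measure_ext_of_Icc_left {α : Type*} [TopologicalSpace α] [SecondCountableTopology α]
    [LinearOrder α] [OrderTopology α] [MeasurableSpace α] [BorelSpace α] {ν ν' : Measure α}
    [IsFiniteMeasure ν] {a b : α} (hν : ν (Icc a b)ᶜ = 0) (hν' : ν' (Icc a b)ᶜ = 0)
    (h : ∀ x ∈ Icc a b, ν (Icc a x) = ν' (Icc a x)) : ν = ν' := by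
  refine Measure.ext_of_Iic ν ν' fun x => ?_
  have inter_eq : Iic x ∩ Icc a b = Icc a (min x b) := by
    rw [inter_comm, ← Ici_inter_Iic, inter_assoc, Iic_inter_Iic, inf_comm, Ici_inter_Iic]
  rw [← measure_inter_conull' (measure_mono_null (sdiff_subset_compl _ _) hν),
    ← measure_inter_conull' (μ := ν') (measure_mono_null (sdiff_subset_compl _ _) hν'), inter_eq]
  by_cases ha : a ≤ min x b
  · exact h _ ⟨ha, min_le_right x b⟩
  · simp only [Icc_eq_empty ha, measure_empty]

namespace RelaxedLSFamily

variable {I : Type*} {T : ℝ} {F : ℝ → I → ℝ} {L M : I → ℝ} {ν ν' : I → Measure ℝ}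

theorem update_zero_iff : RelaxedLSFamily T (update F 0 M) L ν ↔ RelaxedLSFamily T F L ν := by
  have update_pos (x : ℝ) (hx : 0 < x) : update F 0 M x = F x := update_of_ne hx.ne' M F
  simp +contextual only [RelaxedLSFamily, update_pos]

theorem measure_Icc (h : RelaxedLSFamily T F L ν) (i : I) {x : ℝ} (hx : x ∈ Icc 0 T) :
    ν i (Icc 0 x) = ENNReal.ofReal (update F 0 L x i) := by
  rcases hx.1.eq_or_lt with rfl | hx0
  · simpa only [Icc_self, update_self] using (h i).2.1
  · simpa only [update_of_ne hx0.ne'] using (h i).2.2 x hx0 hx.2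

theorem isFiniteMeasure (h : RelaxedLSFamily T F L ν) (i : I) : IsFiniteMeasure (ν i) := by
  refine ⟨?_⟩
  rw [← measure_add_measure_compl (measurableSet_Icc (a := 0) (b := T)), (h i).1, add_zero]
  rcases le_or_gt 0 T with hT | hT
  · rw [h.measure_Icc i (right_mem_Icc.2 hT)]
    exact ENNReal.ofReal_lt_top
  · simp only [Icc_eq_empty hT.not_ge, measure_empty, ENNReal.zero_lt_top]

theorem unique (h : RelaxedLSFamily T F L ν) (h' : RelaxedLSFamily T F L ν') : ν = ν' := by
  funext i
  have := h.isFiniteMeasure i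
  exact measure_ext_of_Icc_left (h i).1 (h' i).1 fun x hx =>
    (h.measure_Icc i hx).trans (h'.measure_Icc i hx).symm

end RelaxedLSFamily

theorem zPrimal_sub_zPrimal {J : ℕ} (c γ μ : Fin J → ℝ) (T : ℝ)
    (U V : ℝ → Fin J → ℝ) (ν : Fin J → Measure ℝ) :
    zPrimal c γ μ T V ν - zPrimal c γ μ T U ν = ∑ j, μ j * (V 0 j - U 0 j) := by
  simp only [zPrimal, add_sub_add_right_eq_sub, mul_sub, Finset.sum_sub_distrib]

namespace RelaxedPrimalFeasible

variable {K J : ℕ} {A : Matrix (Fin K) (Fin J) ℝ} {b β lam : Fin K → ℝ} {T : ℝ}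
  {U : ℝ → Fin J → ℝ} {L : Fin J → ℝ}

theorem monotoneOn (hU : RelaxedPrimalFeasible A b β lam T U) : MonotoneOn U (Icc 0 T) :=
  fun _ hs _ ht hst j => hU.1 j hs ht hst

theorem tendsto_nhdsGT (hU : RelaxedPrimalFeasible A b β lam T U) {t : ℝ} (ht : t ∈ Ioo 0 T) :
    Tendsto U (𝓝[>] t) (𝓝 (U t)) :=
  tendsto_pi_nhds.2 fun j => hU.2.1 j t ht

theorem update_zero (hU : RelaxedPrimalFeasible A b β lam T U) (hT : 0 < T)
    (hL : Tendsto U (𝓝[>] 0) (𝓝 L)) : RelaxedPrimalFeasible A b β lam T (update U 0 L) := by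
  have mono : MonotoneOn (update U 0 L) (Icc 0 T) :=
    monotoneOn_update_left_of_tendsto_nhdsGT hU.monotoneOn hL
  have rightCont (t : ℝ) (ht : t ∈ Ioo 0 T) :
      Tendsto (update U 0 L) (𝓝[>] t) (𝓝 (update U 0 L t)) :=
    tendsto_update_nhdsGT_of_mem_Ico (fun _ => hU.tendsto_nhdsGT) hL (Ioo_subset_Ico_self ht)
  have nonneg (j : Fin J) : 0 ≤ L j :=
    (hU.2.2.1 j).trans (apply_left_le_of_monotoneOn_of_tendsto_nhdsGT hU.monotoneOn hL hT j)
  have constraint (t : ℝ) (ht : t ∈ Ico 0 T) : A.mulVec (update U 0 L t) ≤ β + t • b :=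
    comp_update_le_of_tendsto_nhdsGT (φ := A.mulVec) (g := fun t => β + t • b)
      (by fun_prop) (by fun_prop) hL
      (fun s hs k => hU.2.2.2.1 s (Ioo_subset_Ico_self hs) k) ht
  refine ⟨fun j _ hs _ ht hst => mono hs ht hst j,
    fun j t ht => tendsto_pi_nhds.1 (rightCont t ht) j, ?_, constraint, ?_⟩
  · simpa only [update_self] using nonneg
  · simpa only [update_of_ne hT.ne'] using hU.2.2.2.2

end RelaxedPrimalFeasible

/-- If `μ ≥ 0` and `U*` is a relaxed feasible solution of M-CLP with right limit
`L = U*(0+)` at `0`, then replacing `U*(0)` by `L` gives a relaxed feasible solution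
`U₀` that is right-continuous at `0` (hence on all of `[0,T]`), and
`z(U₀) − z(U*) = μᵀ(U*(0+) − U*(0)) ≥ 0`. -/
theorem rightContinuous_modification_primal {K J : ℕ}
    (A : Matrix (Fin K) (Fin J) ℝ) (b β lam : Fin K → ℝ) (c γ μ : Fin J → ℝ) (T : ℝ)
    (hT : 0 < T) (hμ : ∀ j, 0 ≤ μ j)
    (U : ℝ → Fin J → ℝ) (hU : RelaxedPrimalFeasible A b β lam T U)
    (L : Fin J → ℝ)
    (hL : ∀ j, Tendsto (fun t => U t j) (nhdsWithin 0 (Set.Ioi 0)) (nhds (L j))) :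
    RelaxedPrimalFeasible A b β lam T (fun t => if t = 0 then L else U t) ∧
    (∀ j, ∀ t ∈ Set.Ico (0:ℝ) T,
      Tendsto (fun s => (if s = 0 then L else U s) j) (nhdsWithin t (Set.Ioi t))
        (nhds ((if t = 0 then L else U t) j))) ∧
    (∀ νStar ν0 : Fin J → Measure ℝ,
      RelaxedLSFamily T U L νStar →
      RelaxedLSFamily T (fun t => if t = 0 then L else U t) L ν0 →
      zPrimal c γ μ T (fun t => if t = 0 then L else U t) ν0 - zPrimal c γ μ T U νStar =
        ∑ j, μ j * (L j - U 0 j)) ∧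
    0 ≤ ∑ j, μ j * (L j - U 0 j) := by
  have hL' : Tendsto U (𝓝[>] 0) (𝓝 L) := tendsto_pi_nhds.2 hL
  have le_L : U 0 ≤ L := apply_left_le_of_monotoneOn_of_tendsto_nhdsGT hU.monotoneOn hL' hT
  simp only [← update_apply U 0 L]
  refine ⟨hU.update_zero hT hL', fun j t ht => ?_, fun νStar ν0 hStar h0 => ?_, ?_⟩
  · exact tendsto_pi_nhds.1
      (tendsto_update_nhdsGT_of_mem_Ico (fun _ => hU.tendsto_nhdsGT) hL' ht) j
  · obtain rfl : ν0 = νStar := (RelaxedLSFamily.update_zero_iff.1 h0).unique hStar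
    simpa only [update_self] using zPrimal_sub_zPrimal c γ μ T U (update U 0 L) ν0
  · exact Finset.sum_nonneg fun j _ => mul_nonneg (hμ j) (sub_nonneg.2 (le_L j))
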